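/- Let R be a finite ring, let p be the smallest prime dividing |R|, and let n be the number of distinct primes dividing |R|. Then for k ≥ 1, |{x ∈ R : x^{k+1} = x}| ≤ ((k+1)/p)^n · |R|^{2k/(k+1)}. -/

import Mathlib

/-!
Slide each `y : R` along the integers. If a prime `q` divides `|R|`, then `q` is not a unit of the
commutative ring `ℤ[y]`, so `ℤ[y]` maps to a field of characteristic `q`; there a primitive
`f : ℤ[X]` has at most `deg f` roots, so the `c` with `f(y + c) = 0` meet at most `deg f` residue
classes modulo `q`. Let `M` be the product of the `n` primes dividing `|R|`. By the Chinese
remainder theorem, `f(y + c) = 0` for at most `(deg f) ^ n` of the shifts `c < M`, and averaging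
over `y` shows that `f` has at most `(deg f) ^ n * |R| / M` roots in `R`. As `M ≥ p ^ n`, the choice
`f = X ^ (k + 1) - X` gives the bound with `|R|` in place of `|R| ^ (2k / (k + 1))`.
-/

section Counting

open Finset

theorem card_le_prod_card_image_mod {ι : Type*} {s : Finset ι} {m : ι → ℕ}
    (hm : (s : Set ι).Pairwise (Function.onFun Nat.Coprime m)) {T : Finset ℕ}
    (hT : T ⊆ range (∏ i ∈ s, m i)) :
    #T ≤ ∏ i ∈ s, #(T.image (· % m i)) := by
  classical
  rw [← card_pi]
  refine card_le_card_of_injOn (fun c i _ ↦ c % m i)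
    (fun c hc ↦ mem_pi.2 fun i _ ↦ mem_image_of_mem _ hc) fun c hc d hd hcd ↦ ?_
  have hdvd : ((∏ i ∈ s, m i : ℕ) : ℤ) ∣ d - c := by
    rw [Nat.cast_prod]
    exact prod_dvd_of_coprime (fun i hi j hj hij ↦ Nat.isCoprime_iff_coprime.2 (hm hi hj hij))
      fun i hi ↦ Nat.modEq_iff_dvd.1 (congrFun₂ hcd i hi)
  exact (Nat.modEq_iff_dvd.2 hdvd).eq_of_lt_of_lt (mem_range.1 (hT hc)) (mem_range.1 (hT hd))

theorem card_mul_card_le_of_card_filter_add_mem_le {ι G : Type*} [AddGroup G] [Fintype G]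
    [DecidableEq G] {X : Finset G} {s : Finset ι} {t : ι → G} {b : ℕ}
    (h : ∀ y, #{i ∈ s | y + t i ∈ X} ≤ b) : #X * #s ≤ b * Fintype.card G := by
  have card_translate (i : ι) : #{y | y + t i ∈ X} = #X :=
    card_equiv (Equiv.addRight (t i)) (by simp)
  calc #X * #s = ∑ i ∈ s, #{y | y + t i ∈ X} := by simp [card_translate, mul_comm]
    _ = ∑ y, #{i ∈ s | y + t i ∈ X} :=
      (sum_card_bipartiteAbove_eq_sum_card_bipartiteBelow (fun y i ↦ y + t i ∈ X)).symm
    _ ≤ b * Fintype.card G := by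
      simpa [mul_comm] using sum_le_card_nsmul univ _ b fun y _ ↦ h y

theorem minFac_pow_card_primeFactors_le_prod (n : ℕ) :
    n.minFac ^ #n.primeFactors ≤ ∏ q ∈ n.primeFactors, q :=
  pow_card_le_prod _ _ _ fun _ hq ↦
    Nat.minFac_le_of_dvd (Nat.prime_of_mem_primeFactors hq).two_le (Nat.dvd_of_mem_primeFactors hq)

end Counting

section Roots

open Finset Polynomial

variable {f : ℤ[X]} {q : ℕ}

theorem not_isUnit_natCast_of_prime_dvd_card {R : Type*} [Ring R] [Finite R] (hq : q.Prime)
    (hdvd : q ∣ Nat.card R) : ¬IsUnit (q : R) := by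
  have : Fact q.Prime := ⟨hq⟩
  obtain ⟨x, hx⟩ := exists_prime_addOrderOf_dvd_card' q hdvd
  have hqx : (q : R) * x = 0 := by rw [← nsmul_eq_mul, ← hx, addOrderOf_nsmul_eq_zero]
  intro hunit
  rw [hunit.mul_right_eq_zero.1 hqx, addOrderOf_zero] at hx
  exact hq.one_lt.ne hx

theorem map_algebraMap_int_ne_zero_of_isPrimitive (S : Type*) [Ring S] [Nontrivial S]
    (hf : f.IsPrimitive) : f.map (algebraMap ℤ S) ≠ 0 := by
  intro hzero
  have hdvd : C (ringChar S : ℤ) ∣ f := (C_dvd_iff_dvd_coeff _ _).2 fun i ↦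
    (CharP.intCast_eq_zero_iff S _ _).1 (by simpa using congrArg (coeff · i) hzero)
  have hunit := Int.isUnit_iff_natAbs_eq.1 (hf _ hdvd)
  exact CharP.ringChar_ne_one (by simpa using hunit)

theorem card_image_mod_le_natDegree_of_isDomain {K : Type*} [CommRing K] [IsDomain K] [CharP K q]
    (hq : 0 < q) (hf : f.IsPrimitive) (a : K) {T : Finset ℕ}
    (hT : ∀ c ∈ T, aeval (a + c) f = 0) : #(T.image (· % q)) ≤ f.natDegree := by
  classical
  have hmaps : ∀ r ∈ T.image (· % q), a + r ∈ f.rootSet K := by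
    simp only [forall_mem_image, mem_rootSet', ← CharP.natCast_eq_natCast_mod K q]
    exact fun c hc ↦ ⟨map_algebraMap_int_ne_zero_of_isPrimitive K hf, hT c hc⟩
  have hinj : Set.InjOn (fun r : ℕ ↦ a + (r : K)) (T.image (· % q)) := by
    refine ((add_right_injective a).comp_injOn (CharP.natCast_injOn_Iio K q)).mono fun r hr ↦ ?_
    obtain ⟨c, -, rfl⟩ := mem_image.1 hr
    exact Nat.mod_lt c hq
  rw [← Set.ncard_coe_finset]
  exact (Set.ncard_le_ncard_of_injOn _ hmaps hinj (f.rootSet_finite K)).trans (ncard_rootSet_le f K)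

theorem card_image_mod_le_natDegree_of_commRing {A : Type*} [CommRing A] (hq : q.Prime)
    (hunit : ¬IsUnit (q : A)) (hf : f.IsPrimitive) (a : A) {T : Finset ℕ}
    (hT : ∀ c ∈ T, aeval (a + c) f = 0) : #(T.image (· % q)) ≤ f.natDegree := by
  obtain ⟨I, hI, hqI⟩ := exists_max_ideal_of_mem_nonunits hunit
  have : CharP (A ⧸ I) q := (CharP.charP_iff_prime_eq_zero hq).2 <| by
    simpa using Ideal.Quotient.eq_zero_iff_mem.2 hqI
  refine card_image_mod_le_natDegree_of_isDomain hq.pos hf (Ideal.Quotient.mk I a) fun c hc ↦ ?_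
  simpa [hT c hc] using aeval_algHom_apply (Ideal.Quotient.mk I).toIntAlgHom (a + c) f

theorem card_image_mod_le_natDegree {R : Type*} [Ring R] (hq : q.Prime)
    (hunit : ¬IsUnit (q : R)) (hf : f.IsPrimitive) (y : R) {T : Finset ℕ}
    (hT : ∀ c ∈ T, aeval (y + c) f = 0) : #(T.image (· % q)) ≤ f.natDegree := by
  let A := Algebra.adjoin ℤ {y}
  let a : A := ⟨y, Algebra.self_mem_adjoin_singleton ℤ y⟩
  have hunitA : ¬IsUnit (q : A) := fun h ↦ hunit (by simpa using h.map A.val)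
  refine card_image_mod_le_natDegree_of_commRing hq hunitA hf a fun c hc ↦ Subtype.val_injective ?_
  simpa [a, hT c hc] using (aeval_algHom_apply A.val (a + c) f).symm

theorem card_filter_range_aeval_add_natCast_le {R : Type*} [Ring R] [DecidableEq R] {s : Finset ℕ}
    (hs : ∀ q ∈ s, q.Prime) (hunit : ∀ q ∈ s, ¬IsUnit (q : R)) (hf : f.IsPrimitive) (y : R) :
    #{c ∈ range (∏ q ∈ s, q) | aeval (y + ((c : ℕ) : R)) f = 0} ≤ f.natDegree ^ #s := by
  have hcoprime : (s : Set ℕ).Pairwise Nat.Coprime := fun p hp q hq hpq ↦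
    (Nat.coprime_primes (hs p hp) (hs q hq)).2 hpq
  refine (card_le_prod_card_image_mod hcoprime (filter_subset _ _)).trans
    (prod_le_pow_card _ _ _ fun q hq ↦ ?_)
  exact card_image_mod_le_natDegree (hs q hq) (hunit q hq) hf y fun c hc ↦ (mem_filter.1 hc).2

theorem card_aeval_eq_zero_mul_prod_primeFactors_le (R : Type*) [Ring R] [Finite R]
    (hf : f.IsPrimitive) :
    Nat.card {x : R // aeval x f = 0} * ∏ q ∈ (Nat.card R).primeFactors, q ≤
      f.natDegree ^ #(Nat.card R).primeFactors * Nat.card R := by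
  classical
  have := Fintype.ofFinite R
  set Q := (Nat.card R).primeFactors
  have hprime : ∀ q ∈ Q, q.Prime := fun _ ↦ Nat.prime_of_mem_primeFactors
  have hunit : ∀ q ∈ Q, ¬IsUnit (q : R) := fun q hq ↦
    not_isUnit_natCast_of_prime_dvd_card (hprime q hq) (Nat.dvd_of_mem_primeFactors hq)
  let roots : Finset R := {x | aeval x f = 0}
  have hshifts (y : R) :
      #{c ∈ range (∏ q ∈ Q, q) | y + ((c : ℕ) : R) ∈ roots} ≤ f.natDegree ^ #Q := by
    simpa only [roots, mem_filter_univ] using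
      card_filter_range_aeval_add_natCast_le hprime hunit hf y
  simpa [roots, Fintype.card_subtype, Nat.card_eq_fintype_card] using
    card_mul_card_le_of_card_filter_add_mem_le hshifts

theorem stmt_17_general (R : Type*) [Ring R] [Finite R] (hf : f.IsPrimitive) :
    (Nat.card {x : R // aeval x f = 0} : ℝ) ≤
      ((f.natDegree : ℝ) / (Nat.card R).minFac) ^ #(Nat.card R).primeFactors * Nat.card R := by
  have hpos : 0 < ((Nat.card R).minFac : ℝ) := mod_cast (Nat.card R).minFac_pos
  rw [div_pow, div_mul_eq_mul_div, le_div_iff₀ (by positivity)]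
  exact mod_cast (Nat.mul_le_mul_left _ (minFac_pow_card_primeFactors_le_prod _)).trans
    (card_aeval_eq_zero_mul_prod_primeFactors_le R hf)

theorem card_pow_succ_eq_self_le (R : Type*) [Ring R] [Finite R] {k : ℕ} (hk : 1 ≤ k) :
    (Nat.card {x : R // x ^ (k + 1) = x} : ℝ) ≤
      ((k + 1 : ℝ) / (Nat.card R).minFac) ^ #(Nat.card R).primeFactors * Nat.card R := by
  have hlt : (X : ℤ[X]).natDegree < (X ^ (k + 1) : ℤ[X]).natDegree := by
    rw [natDegree_X, natDegree_X_pow]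
    omega
  have hmonic : (X ^ (k + 1) - X : ℤ[X]).Monic :=
    (monic_X_pow _).sub_of_left (degree_lt_degree hlt)
  have hdeg : (X ^ (k + 1) - X : ℤ[X]).natDegree = k + 1 :=
    (natDegree_sub_eq_left_of_natDegree_lt hlt).trans (natDegree_X_pow _)
  simpa [hdeg, sub_eq_zero] using stmt_17_general R hmonic.isPrimitive

end Roots

theorem self_le_rpow_two_mul_div_add_one {x k : ℝ} (hx : 1 ≤ x) (hk : 1 ≤ k) :
    x ≤ x ^ (2 * k / (k + 1)) :=
  Real.self_le_rpow_of_one_le hx ((one_le_div (by linarith)).2 (by linarith))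

/-- For a finite ring `R` with `p` the smallest prime dividing `|R|` and `n` the
number of distinct primes dividing `|R|`, the number of `(k+1)`-potent elements of
`R` is at most `((k+1)/p)^n · |R|^{2k/(k+1)}`. -/
theorem stmt_17 (R : Type) [Ring R] [Fintype R] [Nontrivial R] (k : ℕ) (hk : 1 ≤ k) :
    (Nat.card {x : R // x ^ (k + 1) = x} : ℝ) ≤
      ((k + 1 : ℝ) / (Fintype.card R).minFac) ^ (Fintype.card R).primeFactors.card *
        (Fintype.card R : ℝ) ^ ((2 * (k : ℝ)) / (k + 1)) := by
  rw [← Nat.card_eq_fintype_card]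
  refine (card_pow_succ_eq_self_le R hk).trans ?_
  gcongr
  exact self_le_rpow_two_mul_div_add_one (mod_cast Nat.card_pos) (mod_cast hk)
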